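/- Let C be an abelian category with Ext groups, let S be a thick class of objects (closed under extensions, direct summands, cones and cocones), and let (F,G) be a 1-cotorsion pair cut on Thick(F) such that Ext^i(A,B)=0 for all A∈F, B∈G and all i≥1, and such that F∩G∩S is both a generator and a cogenerator in F∩G. Then (F, (F∩G)^∧) is a left weak AB context cut on S, and F∩G∩S = F∩(F∩G)^∧∩S. -/

import Mathlib

/-!
Write `T` for the thick closure of `F`, and `ω = F ∩ G`. The argument rests on two orthogonality
descriptions inside `T`, both read off from the approximation sequences of the cotorsion pair:
an object `t` of `T` lies in `F` as soon as `Ext¹(t, -)` vanishes on `G ∩ T` (`F_of_ext`), and it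
lies in `G` as soon as `Ext¹(-, t)` vanishes on `F` (`G_of_ext`), because in each case the
approximation sequence splits. Long exact sequences then make `F` left thick and `G ∩ T` closed
under extensions and cones.

The key identification is `ω^∧ = G ∩ T` (`resClass_iff`). Every object `t` of `T` satisfies
`Extⁱ(t, G ∩ T) = 0` for all large `i`, since this property passes through every operation that
generates the thick closure (`exists_extDimLE`). So when an object of `G ∩ T` is resolved by
objects of `ω`, dimension shifting forces the syzygies into `F` after finitely many steps. For an
object of `G ∩ T ∩ S`, composing the epimorphism from `ω` with one coming from the generator
`F ∩ G ∩ S` keeps the whole resolution inside `S` (`exists_cover`, `hasResLength_of_extDimLE`),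
which gives `ω^∧ ∩ S ⊆ (F ∩ S)^∧`. The cogenerator is used in the same way, with monomorphisms
in place of epimorphisms, to embed objects of `F ∩ S` into `ω ∩ S`. Finally
`F ∩ ω^∧ = F ∩ G ∩ T = ω`.
-/

open CategoryTheory

universe w v u

variable {C : Type u} [Category.{v} C] [Abelian C]

/-- `IsSES A B X` : there is a short exact sequence `0 → A → B → X → 0` in `C`. -/
def IsSES (A B X : C) : Prop :=
  ∃ (f : A ⟶ B) (g : B ⟶ X) (zero : f ≫ g = 0),
    (ShortComplex.mk f g zero).ShortExact

/-- `P` is closed under extensions. -/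
def ClosedUnderExtensions (P : C → Prop) : Prop :=
  ∀ ⦃A B X : C⦄, IsSES A B X → P A → P X → P B

/-- `P` is closed under cones. -/
def ClosedUnderCones (P : C → Prop) : Prop :=
  ∀ ⦃A B X : C⦄, IsSES A B X → P A → P B → P X

/-- `P` is closed under cocones. -/
def ClosedUnderCocones (P : C → Prop) : Prop :=
  ∀ ⦃A B X : C⦄, IsSES A B X → P B → P X → P A

/-- `P` is closed under isomorphisms. -/
def ClosedUnderIsos (P : C → Prop) : Prop :=
  ∀ ⦃X Y : C⦄, (X ≅ Y) → P X → P Y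

/-- `P` is closed under direct summands. -/
def ClosedUnderSummands (P : C → Prop) : Prop :=
  ∀ ⦃X Y : C⦄, P X → (∃ (i : Y ⟶ X) (r : X ⟶ Y), i ≫ r = 𝟙 Y) → P Y

/-- `HasResLength P n M` : there is an exact sequence `0 → W_n → ⋯ → W_0 → M → 0`
with all `W_i` in `P`. -/
inductive HasResLength (P : C → Prop) : ℕ → C → Prop
  | of_iso {M W : C} (hW : P W) (e : M ≅ W) : HasResLength P 0 M
  | step {K W M : C} {n : ℕ} (hW : P W) (h : IsSES K W M)
      (hK : HasResLength P n K) : HasResLength P (n + 1) M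

/-- `P^∧` : the class of objects admitting a finite `P`-resolution. -/
def ResClass (P : C → Prop) : C → Prop := fun M => ∃ n, HasResLength P n M

/-- The resolution dimension `resdim_P(M) ∈ ℕ∞`. -/
noncomputable def resDim (P : C → Prop) (M : C) : ℕ∞ :=
  sInf {n : ℕ∞ | ∃ m : ℕ, n = (m : ℕ∞) ∧ HasResLength P m M}

/-- `HasCoresLength P n M` : there is an exact sequence `0 → M → W_0 → ⋯ → W_n → 0`
with all `W_i` in `P`. -/
inductive HasCoresLength (P : C → Prop) : ℕ → C → Prop
  | of_iso {M W : C} (hW : P W) (e : M ≅ W) : HasCoresLength P 0 M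
  | step {M W K : C} {n : ℕ} (hW : P W) (h : IsSES M W K)
      (hK : HasCoresLength P n K) : HasCoresLength P (n + 1) M

/-- `ω ∩ S` is a relative generator in `ω` : every `W ∈ ω` fits in a short exact
sequence `0 → W' → F → W → 0` with `F ∈ ω ∩ S` and `W' ∈ ω`. -/
def RelGenerator (ω S : C → Prop) : Prop :=
  ∀ ⦃W : C⦄, ω W → ∃ (W' F : C), ω W' ∧ (ω F ∧ S F) ∧ IsSES W' F W

/-- `P` is left thick : closed under extensions, direct summands and cocones. -/
def LeftThick (P : C → Prop) : Prop :=
  ClosedUnderExtensions P ∧ ClosedUnderSummands P ∧ ClosedUnderCocones P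

/-- `P` is right thick : closed under extensions, direct summands and cones. -/
def RightThick (P : C → Prop) : Prop :=
  ClosedUnderExtensions P ∧ ClosedUnderSummands P ∧ ClosedUnderCones P

/-- The smallest thick class (closed under extensions, direct summands, cones and
cocones) containing `P`. -/
inductive ThickClosure (P : C → Prop) : C → Prop
  | of {M : C} (h : P M) : ThickClosure P M
  | ext {A B X : C} (h : IsSES A B X) (hA : ThickClosure P A) (hX : ThickClosure P X) :
      ThickClosure P B
  | cone {A B X : C} (h : IsSES A B X) (hA : ThickClosure P A) (hB : ThickClosure P B) :
      ThickClosure P X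
  | cocone {A B X : C} (h : IsSES A B X) (hB : ThickClosure P B) (hX : ThickClosure P X) :
      ThickClosure P A
  | summand {X Y : C} (hX : ThickClosure P X) (i : Y ⟶ X) (r : X ⟶ Y) (hir : i ≫ r = 𝟙 Y) :
      ThickClosure P Y

section WithExt

variable [HasExt.{w} C]

/-- `Ext^i(A, B) = 0` for all `A ∈ P`, `B ∈ Q` and all `i ≥ 1`. -/
def ExtVanish (P Q : C → Prop) : Prop :=
  ∀ ⦃A B : C⦄, P A → Q B → ∀ i : ℕ, 1 ≤ i → Subsingleton (Abelian.Ext A B i)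

/-- `(X, ω)` is a left Frobenius pair in `C`. -/
def IsLeftFrobenius (X ω : C → Prop) : Prop :=
  LeftThick X ∧ (∀ ⦃W : C⦄, ω W → X W) ∧ ClosedUnderSummands ω ∧
    ExtVanish X ω ∧
    (∀ ⦃A : C⦄, X A → ∃ (W A' : C), ω W ∧ X A' ∧ IsSES A W A')

/-- `(X, ω)` is a left Frobenius pair cut on `S`. -/
def IsLeftFrobeniusCut (X ω S : C → Prop) : Prop :=
  LeftThick X ∧
  IsLeftFrobenius (fun M => X M ∧ S M) (fun M => ω M ∧ S M) ∧
  (ExtVanish (fun M => ω M ∧ S M) ω ∧ RelGenerator ω S) ∧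
  (ClosedUnderExtensions ω ∧ ClosedUnderSummands ω)

/-- `(A, B)` is a left weak AB context cut on `S`. -/
def IsLeftWeakABCut (A B S : C → Prop) : Prop :=
  IsLeftFrobeniusCut A (fun M => A M ∧ B M) S ∧
  RightThick (fun M => B M ∧ S M) ∧
  (∀ ⦃M : C⦄, B M → S M → ResClass (fun N => A N ∧ S N) M)

/-- `(U, V)` is a left 1-cotorsion pair cut on `T`. -/
def IsLeft1CotorsionCut (U V T : C → Prop) : Prop :=
  ClosedUnderSummands U ∧
  (∀ ⦃A B : C⦄, U A → T A → V B → Subsingleton (Abelian.Ext A B 1)) ∧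
  (∀ ⦃t : C⦄, T t → ∃ (K A : C), U A ∧ (∃ V' : C, V V' ∧ Nonempty (K ≅ V')) ∧ IsSES K A t)

/-- `(U, V)` is a right 1-cotorsion pair cut on `T`. -/
def IsRight1CotorsionCut (U V T : C → Prop) : Prop :=
  ClosedUnderSummands V ∧
  (∀ ⦃A B : C⦄, U A → V B → T B → Subsingleton (Abelian.Ext A B 1)) ∧
  (∀ ⦃t : C⦄, T t → ∃ (B W : C), V B ∧ (∃ U' : C, U U' ∧ Nonempty (W ≅ U')) ∧ IsSES t B W)

/-- `(U, V)` is a 1-cotorsion pair cut on `T`. -/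
def Is1CotorsionCut (U V T : C → Prop) : Prop :=
  IsLeft1CotorsionCut U V T ∧ IsRight1CotorsionCut U V T

/-- `(A, B)` is a left `n`-cotorsion pair cut on `S`. -/
def IsLeftNCotorsionCut (n : ℕ) (A B S : C → Prop) : Prop :=
  ClosedUnderSummands A ∧
  (∀ ⦃X Y : C⦄, A X → S X → B Y → ∀ i : ℕ, 1 ≤ i → i ≤ n → Subsingleton (Abelian.Ext X Y i)) ∧
  (∀ ⦃s : C⦄, S s → ∃ (K X : C), A X ∧ (∃ m : ℕ, m ≤ n - 1 ∧ HasResLength B m K) ∧ IsSES K X s)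

/-- `(A, B)` is a right `n`-cotorsion pair cut on `S`. -/
def IsRightNCotorsionCut (n : ℕ) (A B S : C → Prop) : Prop :=
  ClosedUnderSummands B ∧
  (∀ ⦃X Y : C⦄, A X → B Y → S Y → ∀ i : ℕ, 1 ≤ i → i ≤ n → Subsingleton (Abelian.Ext X Y i)) ∧
  (∀ ⦃s : C⦄, S s → ∃ (Y W : C), B Y ∧ (∃ m : ℕ, m ≤ n - 1 ∧ HasCoresLength A m W) ∧ IsSES s Y W)

/-- `(F, G)` is a complete cotorsion pair in `T`. -/
def IsCompleteCotorsionPairIn (T F G : C → Prop) : Prop :=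
  (∀ ⦃M : C⦄, F M → T M) ∧ (∀ ⦃M : C⦄, G M → T M) ∧
  ClosedUnderSummands F ∧ ClosedUnderSummands G ∧
  (∀ ⦃A B : C⦄, F A → G B → Subsingleton (Abelian.Ext A B 1)) ∧
  (∀ ⦃M : C⦄, T M →
    (∃ G₁ F₁ : C, G G₁ ∧ F F₁ ∧ IsSES G₁ F₁ M) ∧
    (∃ G₂ F₂ : C, G G₂ ∧ F F₂ ∧ IsSES M G₂ F₂))

end WithExt

section Helpers

open Limits Abelian

/-! ### Short exact sequences -/

lemma IsSES.of_iso {A B X A' X' : C} (h : IsSES A B X) (eA : A ≅ A') (eX : X ≅ X') :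
    IsSES A' B X' := by
  obtain ⟨f, g, zero, hs⟩ := h
  refine ⟨eA.inv ≫ f, g ≫ eX.hom, by rw [Category.assoc, ← Category.assoc f, zero]; simp, ?_⟩
  let e : ShortComplex.mk f g zero ≅
      ShortComplex.mk (eA.inv ≫ f) (g ≫ eX.hom) (by rw [Category.assoc, ← Category.assoc f, zero]; simp) :=
    ShortComplex.isoMk eA (Iso.refl _) eX (by simp) (by simp)
  exact ShortComplex.shortExact_of_iso e hs

lemma isSES_cokernel {A B : C} (f : A ⟶ B) [Mono f] : IsSES A B (cokernel f) :=
  ⟨f, cokernel.π f, cokernel.condition f,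
    { exact := ShortComplex.exact_of_g_is_cokernel _ (cokernelIsCokernel f) }⟩

lemma isSES_kernel {A B : C} (f : A ⟶ B) [Epi f] : IsSES (kernel f) A B :=
  ⟨kernel.ι f, f, kernel.condition f,
    { exact := ShortComplex.exact_of_f_is_kernel _ (kernelIsKernel f) }⟩

lemma isSES_cokernel_comp {A B D : C} (f : A ⟶ B) (g : B ⟶ D) [Mono g] :
    IsSES (cokernel f) (cokernel (f ≫ g)) (cokernel g) := by
  let s := kernelCokernelCompSequence.snakeInput f g
  have hm : Mono s.L₃.f := by
    refine s.L₂'_exact.mono_g ?_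
    have : IsZero s.L₂'.X₁ := isZero_kernel_of_mono g
    exact this.eq_of_src _ _
  have he : Epi s.L₃.g := by
    change Epi (cokernel.map (f ≫ g) g f (𝟙 _) (by simp))
    infer_instance
  exact ⟨s.L₃.f, s.L₃.g, s.L₃.zero, { exact := s.L₃_exact, mono_f := hm, epi_g := he }⟩

lemma isSES_kernel_comp {A B D : C} (f : A ⟶ B) (g : B ⟶ D) [Epi f] :
    IsSES (kernel f) (kernel (f ≫ g)) (kernel g) := by
  let s := kernelCokernelCompSequence.snakeInput f g
  have he : Epi s.L₀.g := by
    refine s.L₁'_exact.epi_f ?_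
    have : IsZero s.L₁'.X₃ := isZero_cokernel_of_epi f
    exact this.eq_of_tgt _ _
  have hm : Mono s.L₀.f := by
    change Mono (kernel.map f (f ≫ g) (𝟙 _) g (by simp))
    infer_instance
  exact ⟨s.L₀.f, s.L₀.g, s.L₀.zero, { exact := s.L₀_exact, mono_f := hm, epi_g := he }⟩

/-- The cokernel of a composite of monomorphisms is an extension of the two cokernels. -/
lemma IsSES.comp_mono {A W X L Y : C} (h₁ : IsSES A W X) (h₂ : IsSES W L Y) :
    ∃ Q, IsSES A L Q ∧ IsSES X Q Y := by
  obtain ⟨f, g, z, hs⟩ := h₁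
  obtain ⟨f', g', z', hs'⟩ := h₂
  have : Mono f := hs.mono_f
  have : Mono f' := hs'.mono_f
  exact ⟨cokernel (f ≫ f'), isSES_cokernel _, (isSES_cokernel_comp f f').of_iso
    ((cokernelIsCokernel f).coconePointUniqueUpToIso hs.gIsCokernel)
    ((cokernelIsCokernel f').coconePointUniqueUpToIso hs'.gIsCokernel)⟩

/-- The kernel of a composite of epimorphisms is an extension of the two kernels. -/
lemma IsSES.comp_epi {K A M W L : C} (h₁ : IsSES K A M) (h₂ : IsSES W L A) :
    ∃ Q, IsSES Q L M ∧ IsSES W Q K := by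
  obtain ⟨f, g, z, hs⟩ := h₁
  obtain ⟨f', g', z', hs'⟩ := h₂
  have : Epi g := hs.epi_g
  have : Epi g' := hs'.epi_g
  exact ⟨kernel (g' ≫ g), isSES_kernel _, (isSES_kernel_comp g' g).of_iso
    ((kernelIsKernel g').conePointUniqueUpToIso hs'.fIsKernel)
    ((kernelIsKernel g).conePointUniqueUpToIso hs.fIsKernel)⟩

lemma ClosedUnderSummands.of_iso {P : C → Prop} (hP : ClosedUnderSummands P) {X Y : C}
    (e : X ≅ Y) (hX : P X) : P Y :=
  hP hX ⟨e.inv, e.hom, e.inv_hom_id⟩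

lemma HasResLength.mono {P Q : C → Prop} (hPQ : ∀ M, P M → Q M) {n : ℕ} {M : C}
    (h : HasResLength P n M) : HasResLength Q n M := by
  induction h with
  | of_iso hW e => exact .of_iso (hPQ _ hW) e
  | step hW hs _ ih => exact .step (hPQ _ hW) hs ih

variable [HasExt.{w} C]

/-! ### Vanishing of Ext along short exact sequences -/

lemma subsingleton_of_forall_eq_zero {X Y : C} {n : ℕ} (h : ∀ x : Ext X Y n, x = 0) :
    Subsingleton (Ext X Y n) :=
  ⟨fun a b => (h a).trans (h b).symm⟩

lemma IsSES.ext_to_mid {A B X : C} (h : IsSES A B X) {Y : C} {n : ℕ}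
    (hA : Subsingleton (Ext Y A n)) (hX : Subsingleton (Ext Y X n)) :
    Subsingleton (Ext Y B n) := by
  obtain ⟨f, g, z, hs⟩ := h
  refine subsingleton_of_forall_eq_zero fun x => ?_
  obtain ⟨y, rfl⟩ := Ext.covariant_sequence_exact₂ Y hs x (hX.elim _ _)
  rw [hA.elim y 0, Ext.zero_comp]

lemma IsSES.ext_to_right {A B X : C} (h : IsSES A B X) {Y : C} {n : ℕ}
    (hB : Subsingleton (Ext Y B n)) (hA : Subsingleton (Ext Y A (n + 1))) :
    Subsingleton (Ext Y X n) := by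
  obtain ⟨f, g, z, hs⟩ := h
  refine subsingleton_of_forall_eq_zero fun x => ?_
  obtain ⟨y, rfl⟩ := Ext.covariant_sequence_exact₃ Y hs x rfl (hA.elim _ _)
  rw [hB.elim y 0, Ext.zero_comp]

lemma IsSES.ext_from_mid {A B X : C} (h : IsSES A B X) {Y : C} {n : ℕ}
    (hA : Subsingleton (Ext A Y n)) (hX : Subsingleton (Ext X Y n)) :
    Subsingleton (Ext B Y n) := by
  obtain ⟨f, g, z, hs⟩ := h
  refine subsingleton_of_forall_eq_zero fun x => ?_
  obtain ⟨y, rfl⟩ := Ext.contravariant_sequence_exact₂ hs Y x (hA.elim _ _)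
  rw [hX.elim y 0, Ext.comp_zero]

lemma IsSES.ext_from_left {A B X : C} (h : IsSES A B X) {Y : C} {n : ℕ}
    (hB : Subsingleton (Ext B Y n)) (hX : Subsingleton (Ext X Y (n + 1))) :
    Subsingleton (Ext A Y n) := by
  obtain ⟨f, g, z, hs⟩ := h
  refine subsingleton_of_forall_eq_zero fun x => ?_
  obtain ⟨y, rfl⟩ := Ext.contravariant_sequence_exact₁ hs Y x (Nat.add_comm 1 n) (hX.elim _ _)
  rw [hB.elim y 0, Ext.comp_zero]

lemma IsSES.ext_from_right {A B X : C} (h : IsSES A B X) {Y : C} {n : ℕ}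
    (hA : Subsingleton (Ext A Y n)) (hB : Subsingleton (Ext B Y (n + 1))) :
    Subsingleton (Ext X Y (n + 1)) := by
  obtain ⟨f, g, z, hs⟩ := h
  refine subsingleton_of_forall_eq_zero fun x => ?_
  obtain ⟨y, rfl⟩ := Ext.contravariant_sequence_exact₃ hs Y x (hB.elim _ _) (Nat.add_comm 1 n)
  rw [hA.elim y 0, Ext.comp_zero]

lemma ext_from_summand {X Y : C} (i : Y ⟶ X) (r : X ⟶ Y) (hir : i ≫ r = 𝟙 Y) {Z : C} {n : ℕ}
    (hX : Subsingleton (Ext X Z n)) : Subsingleton (Ext Y Z n) := by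
  refine subsingleton_of_forall_eq_zero fun x => ?_
  rw [← Ext.mk₀_id_comp x, ← hir, ← Ext.mk₀_comp_mk₀_assoc,
    hX.elim ((Ext.mk₀ r).comp x (zero_add n)) 0, Ext.comp_zero]

lemma IsSES.exists_section {A B X : C} (h : IsSES A B X) (hXA : Subsingleton (Ext X A 1)) :
    (∃ (i : A ⟶ B) (r : B ⟶ A), i ≫ r = 𝟙 A) ∧ (∃ (i : X ⟶ B) (r : B ⟶ X), i ≫ r = 𝟙 X) := by
  obtain ⟨f, g, z, hs⟩ := h
  -- Lift the identity of `X`, seen as a class of degree zero, along `g`.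
  obtain ⟨y, hy⟩ := Ext.covariant_sequence_exact₃ X hs (Ext.mk₀ (𝟙 X)) (zero_add 1)
    (hXA.elim _ _)
  obtain ⟨s, rfl⟩ := (Ext.mk₀_bijective X B).2 y
  have hsg : s ≫ g = 𝟙 X := by
    apply (Ext.mk₀_bijective X X).1
    rw [← hy]
    exact (Ext.mk₀_comp_mk₀ s g).symm
  exact ⟨⟨f, (ShortComplex.Splitting.ofExactOfSection _ hs.exact s hsg hs.mono_f).r,
    (ShortComplex.Splitting.ofExactOfSection _ hs.exact s hsg hs.mono_f).f_r⟩, s, g, hsg⟩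

/-! ### Orthogonality inside the thick closure -/

section Cotorsion

variable {F G : C → Prop}

lemma exists_left_approx (h : Is1CotorsionCut F G (ThickClosure F)) {t : C}
    (ht : ThickClosure F t) :
    ∃ K A : C, F A ∧ (G K ∧ ThickClosure F K) ∧ IsSES K A t := by
  obtain ⟨K, A, hA, ⟨V, hV, ⟨e⟩⟩, hs⟩ := h.1.2.2 ht
  exact ⟨K, A, hA, ⟨h.2.1.of_iso e.symm hV, .cocone hs (.of hA) ht⟩, hs⟩

lemma exists_right_approx (h : Is1CotorsionCut F G (ThickClosure F)) {t : C}
    (ht : ThickClosure F t) :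
    ∃ B W : C, (G B ∧ ThickClosure F B) ∧ F W ∧ IsSES t B W := by
  obtain ⟨B, W, hB, ⟨U, hU, ⟨e⟩⟩, hs⟩ := h.2.2.2 ht
  have hW : F W := h.1.1.of_iso e.symm hU
  exact ⟨B, W, ⟨hB, .ext hs ht (.of hW)⟩, hW, hs⟩

lemma F_of_ext (h : Is1CotorsionCut F G (ThickClosure F)) {t : C} (ht : ThickClosure F t)
    (hE : ∀ Y, G Y → ThickClosure F Y → Subsingleton (Ext t Y 1)) : F t := by
  obtain ⟨K, A, hA, ⟨hK, hK'⟩, hs⟩ := exists_left_approx h ht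
  exact h.1.1 hA (hs.exists_section (hE K hK hK')).2

lemma G_of_ext (h : Is1CotorsionCut F G (ThickClosure F)) {t : C} (ht : ThickClosure F t)
    (hE : ∀ Y, F Y → Subsingleton (Ext Y t 1)) : G t := by
  obtain ⟨B, W, ⟨hB, -⟩, hW, hs⟩ := exists_right_approx h ht
  exact h.2.1 hB (hs.exists_section (hE W hW)).1

lemma leftThick_F (h : Is1CotorsionCut F G (ThickClosure F)) (hvan : ExtVanish F G) :
    LeftThick F := by
  refine ⟨fun A B X hs hA hX => ?_, h.1.1, fun A B X hs hB hX => ?_⟩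
  · exact F_of_ext h (.ext hs (.of hA) (.of hX)) fun Y hY _ =>
      hs.ext_from_mid (hvan hA hY 1 le_rfl) (hvan hX hY 1 le_rfl)
  · exact F_of_ext h (.cocone hs (.of hB) (.of hX)) fun Y hY _ =>
      hs.ext_from_left (hvan hB hY 1 le_rfl) (hvan hX hY 2 (by norm_num))

lemma rightThick_G (h : Is1CotorsionCut F G (ThickClosure F)) (hvan : ExtVanish F G) :
    RightThick (fun M => G M ∧ ThickClosure F M) := by
  refine ⟨fun A B X hs hA hX => ?_, fun X Y hX hY => ?_, fun A B X hs hA hB => ?_⟩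
  · have hB : ThickClosure F B := .ext hs hA.2 hX.2
    exact ⟨G_of_ext h hB fun Y hY =>
      hs.ext_to_mid (hvan hY hA.1 1 le_rfl) (hvan hY hX.1 1 le_rfl), hB⟩
  · obtain ⟨i, r, hir⟩ := hY
    exact ⟨h.2.1 hX.1 ⟨i, r, hir⟩, .summand hX.2 i r hir⟩
  · have hX : ThickClosure F X := .cone hs hA.2 hB.2
    exact ⟨G_of_ext h hX fun Y hY =>
      hs.ext_to_right (hvan hY hB.1 1 le_rfl) (hvan hY hA.1 2 (by norm_num)), hX⟩

/-! ### Finite resolutions -/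

/-- The relative homological dimension of `M` with respect to `G ∩ Thick(F)` is at most `n`:
`Extⁱ(M, Y) = 0` for all `i > n` and all `Y` in `G ∩ Thick(F)`. -/
def ExtDimLE (F G : C → Prop) (n : ℕ) (M : C) : Prop :=
  ∀ Y, G Y → ThickClosure F Y → ∀ i, n < i → Subsingleton (Ext M Y i)

/-- Dimension shifting applies because having finite dimension is inherited along each of the
generating operations of the thick closure. -/
lemma exists_extDimLE (hvan : ExtVanish F G) {t : C} (ht : ThickClosure F t) :
    ∃ n, ExtDimLE F G n t := by
  induction ht with
  | of h => exact ⟨0, fun Y hY _ i hi => hvan h hY i hi⟩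
  | ext hs _ _ ihA ihX =>
    obtain ⟨a, ha⟩ := ihA
    obtain ⟨b, hb⟩ := ihX
    exact ⟨a + b, fun Y hY hY' i hi =>
      hs.ext_from_mid (ha Y hY hY' i (by omega)) (hb Y hY hY' i (by omega))⟩
  | cone hs _ _ ihA ihB =>
    obtain ⟨a, ha⟩ := ihA
    obtain ⟨b, hb⟩ := ihB
    refine ⟨a + b + 1, fun Y hY hY' i hi => ?_⟩
    obtain ⟨j, rfl⟩ : ∃ j, i = j + 1 := ⟨i - 1, by omega⟩
    exact hs.ext_from_right (ha Y hY hY' j (by omega)) (hb Y hY hY' (j + 1) (by omega))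
  | cocone hs _ _ ihB ihX =>
    obtain ⟨a, ha⟩ := ihB
    obtain ⟨b, hb⟩ := ihX
    exact ⟨a + b, fun Y hY hY' i hi =>
      hs.ext_from_left (ha Y hY hY' i (by omega)) (hb Y hY hY' (i + 1) (by omega))⟩
  | summand _ i r hir ih =>
    obtain ⟨a, ha⟩ := ih
    exact ⟨a, fun Y hY hY' j hj => ext_from_summand i r hir (ha Y hY hY' j hj)⟩

/-- If every object of `G ∩ Thick(F) ∩ P` is a quotient of an object of `F ∩ G ∩ P` with kernel
again in `G ∩ Thick(F) ∩ P`, iterating produces resolutions whose length is bounded by the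
relative dimension, since each syzygy lowers that dimension by one. -/
lemma hasResLength_of_extDimLE (h : Is1CotorsionCut F G (ThickClosure F))
    (hvan : ExtVanish F G) {P : C → Prop}
    (hP : ∀ M, G M → ThickClosure F M → P M → ∃ K L : C,
      (G K ∧ ThickClosure F K ∧ P K) ∧ (F L ∧ G L ∧ P L) ∧ IsSES K L M) (n : ℕ) :
    ∀ M, G M → ThickClosure F M → P M → ExtDimLE F G n M →
      HasResLength (fun N => F N ∧ G N ∧ P N) n M := by
  induction n with
  | zero =>
    intro M hG hT hPM hd
    exact .of_iso ⟨F_of_ext h hT fun Y hY hY' => hd Y hY hY' 1 one_pos, hG, hPM⟩ (Iso.refl M)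
  | succ n ih =>
    intro M hG hT hPM hd
    obtain ⟨K, L, ⟨hK, hK', hPK⟩, hL, hs⟩ := hP M hG hT hPM
    exact .step hL hs (ih K hK hK' hPK fun Y hY hY' i hi =>
      hs.ext_from_left (hvan hL.1 hY i (by omega)) (hd Y hY hY' (i + 1) (by omega)))

/-- An object of `G ∩ Thick(F)` is a quotient of an object of `F ∩ G` with kernel in
`G ∩ Thick(F)`. -/
lemma exists_omega_cover (h : Is1CotorsionCut F G (ThickClosure F)) (hvan : ExtVanish F G)
    {M : C} (hM : G M ∧ ThickClosure F M) :
    ∃ K L : C, (G K ∧ ThickClosure F K) ∧ (F L ∧ G L) ∧ IsSES K L M := by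
  obtain ⟨K, A, hA, hK, hs⟩ := exists_left_approx h hM.2
  exact ⟨K, A, hK, ⟨hA, ((rightThick_G h hvan).1 hs hK hM).1⟩, hs⟩

/-- The version of `exists_omega_cover` that stays inside `S`: the cover by an object of `F ∩ G`
is refined to one by an object of `F ∩ G ∩ S`, at the cost of extending the kernel by an object
of `F ∩ G`. -/
lemma exists_cover (h : Is1CotorsionCut F G (ThickClosure F)) (hvan : ExtVanish F G)
    {S : C → Prop} (hScocone : ClosedUnderCocones S)
    (hgen : ∀ ⦃W : C⦄, F W ∧ G W →
      ∃ (W' L : C), (F W' ∧ G W') ∧ ((F L ∧ G L) ∧ S L) ∧ IsSES W' L W)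
    {M : C} (hG : G M) (hT : ThickClosure F M) (hS : S M) :
    ∃ K L : C, (G K ∧ ThickClosure F K ∧ S K) ∧ (F L ∧ G L ∧ S L) ∧ IsSES K L M := by
  obtain ⟨K, A, hK, hA, hs⟩ := exists_omega_cover h hvan ⟨hG, hT⟩
  obtain ⟨W', L, hW', ⟨hL, hLS⟩, hs'⟩ := hgen hA
  obtain ⟨Q, hQ, hQ'⟩ := hs.comp_epi hs'
  have := (rightThick_G h hvan).1 hQ' ⟨hW'.2, .of hW'.1⟩ hK
  exact ⟨Q, L, ⟨this.1, this.2, hScocone hQ hLS hS⟩, ⟨hL.1, hL.2, hLS⟩, hQ⟩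

/-- `(F ∩ G)^∧ = G ∩ Thick(F)`. -/
lemma resClass_iff (h : Is1CotorsionCut F G (ThickClosure F)) (hvan : ExtVanish F G) (M : C) :
    ResClass (fun N => F N ∧ G N) M ↔ G M ∧ ThickClosure F M := by
  constructor
  · rintro ⟨n, hn⟩
    induction hn with
    | of_iso hW e =>
      exact (rightThick_G h hvan).2.1.of_iso e.symm ⟨hW.2, .of hW.1⟩
    | step hW hs _ ih => exact (rightThick_G h hvan).2.2 hs ih ⟨hW.2, .of hW.1⟩
  · rintro ⟨hG, hT⟩
    obtain ⟨n, hn⟩ := exists_extDimLE hvan hT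
    refine ⟨n, (hasResLength_of_extDimLE h hvan (P := fun _ => True) ?_ n M hG hT trivial
      hn).mono fun N hN => ⟨hN.1, hN.2.1⟩⟩
    intro M hG hT _
    obtain ⟨K, L, hK, hL, hs⟩ := exists_omega_cover h hvan ⟨hG, hT⟩
    exact ⟨K, L, ⟨hK.1, hK.2, trivial⟩, ⟨hL.1, hL.2, trivial⟩, hs⟩

/-- Objects of `F ∩ S` embed into `F ∩ G ∩ S` with cokernel in `F ∩ S`. -/
lemma exists_coresolution (h : Is1CotorsionCut F G (ThickClosure F)) (hvan : ExtVanish F G)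
    {S : C → Prop} (hScone : ClosedUnderCones S)
    (hcogen : ∀ ⦃W : C⦄, F W ∧ G W →
      ∃ (L W'' : C), ((F L ∧ G L) ∧ S L) ∧ (F W'' ∧ G W'') ∧ IsSES W L W'')
    {A : C} (hA : F A) (hS : S A) :
    ∃ W A' : C, ((F W ∧ G W) ∧ S W) ∧ (F A' ∧ S A') ∧ IsSES A W A' := by
  have hF := leftThick_F h hvan
  obtain ⟨B, X, hB, hX, hs⟩ := exists_right_approx h (.of hA)
  obtain ⟨L, Y, hL, hY, hs'⟩ := hcogen ⟨hF.1 hs hA hX, hB.1⟩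
  obtain ⟨Q, hQ, hQ'⟩ := hs.comp_mono hs'
  exact ⟨L, Q, hL, ⟨hF.1 hQ' hX hY.1, hScone hQ hS hL.2⟩, hQ⟩

end Cotorsion

end Helpers

theorem stmt_14 [HasExt.{w} C] (F G S : C → Prop)
    (hSext : ClosedUnderExtensions S) (hSsum : ClosedUnderSummands S)
    (hScone : ClosedUnderCones S) (hScocone : ClosedUnderCocones S)
    (h : Is1CotorsionCut F G (ThickClosure F))
    (hvan : ExtVanish F G)
    (hgen : ∀ ⦃W : C⦄, F W ∧ G W →
      ∃ (W' L : C), (F W' ∧ G W') ∧ ((F L ∧ G L) ∧ S L) ∧ IsSES W' L W)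
    (hcogen : ∀ ⦃W : C⦄, F W ∧ G W →
      ∃ (L W'' : C), ((F L ∧ G L) ∧ S L) ∧ (F W'' ∧ G W'') ∧ IsSES W L W'') :
    IsLeftWeakABCut F (ResClass (fun N => F N ∧ G N)) S ∧
    (∀ M : C, (F M ∧ G M ∧ S M) ↔ (F M ∧ ResClass (fun N => F N ∧ G N) M ∧ S M)) := by
  have hF := leftThick_F h hvan
  have hG := rightThick_G h hvan
  have hres : ResClass (fun N => F N ∧ G N) = fun M => G M ∧ ThickClosure F M :=
    funext fun M => propext (resClass_iff h hvan M)
  rw [hres]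
  refine ⟨⟨⟨hF, ⟨⟨?_, ?_, ?_⟩, ?_, ?_, ?_, ?_⟩, ⟨?_, ?_⟩, ?_, ?_⟩, ⟨?_, ?_, ?_⟩, ?_⟩, ?_⟩
  · exact fun A B X hs hA hX => ⟨hF.1 hs hA.1 hX.1, hSext hs hA.2 hX.2⟩
  · exact fun X Y hX hY => ⟨hF.2.1 hX.1 hY, hSsum hX.2 hY⟩
  · exact fun A B X hs hB hX => ⟨hF.2.2 hs hB.1 hX.1, hScocone hs hB.2 hX.2⟩
  · exact fun W hW => ⟨hW.1.1, hW.2⟩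
  · exact fun X Y hX hY => ⟨⟨hF.2.1 hX.1.1 hY, hG.2.1 hX.1.2 hY⟩, hSsum hX.2 hY⟩
  · exact fun A B hA hB => hvan hA.1 hB.1.2.1
  · intro A hA
    obtain ⟨W, A', hW, hA', hs⟩ := exists_coresolution h hvan hScone hcogen hA.1 hA.2
    exact ⟨W, A', ⟨⟨hW.1.1, hW.1.2, .of hW.1.1⟩, hW.2⟩, hA', hs⟩
  · exact fun A B hA hB => hvan hA.1.1 hB.2.1
  · intro W hW
    obtain ⟨W', L, hW', hL, hs⟩ := hgen ⟨hW.1, hW.2.1⟩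
    exact ⟨W', L, ⟨hW'.1, hW'.2, .of hW'.1⟩, ⟨⟨hL.1.1, hL.1.2, .of hL.1.1⟩, hL.2⟩, hs⟩
  · exact fun A B X hs hA hX => ⟨hF.1 hs hA.1 hX.1, hG.1 hs hA.2 hX.2⟩
  · exact fun X Y hX hY => ⟨hF.2.1 hX.1 hY, hG.2.1 hX.2 hY⟩
  · exact fun A B X hs hA hX => ⟨hG.1 hs hA.1 hX.1, hSext hs hA.2 hX.2⟩
  · exact fun X Y hX hY => ⟨hG.2.1 hX.1 hY, hSsum hX.2 hY⟩
  · exact fun A B X hs hA hB => ⟨hG.2.2 hs hA.1 hB.1, hScone hs hA.2 hB.2⟩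
  · intro M hM hS
    obtain ⟨n, hn⟩ := exists_extDimLE hvan hM.2
    exact ⟨n, (hasResLength_of_extDimLE h hvan
      (fun M hG hT hS => exists_cover h hvan hScocone hgen hG hT hS) n M hM.1 hM.2 hS hn).mono
      fun N hN => ⟨hN.1, hN.2.2⟩⟩
  · exact fun M => ⟨fun hM => ⟨hM.1, ⟨hM.2.1, .of hM.1⟩, hM.2.2⟩,
      fun hM => ⟨hM.1, hM.2.1.1, hM.2.2⟩⟩
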